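/- arXiv:2202.04339 — 3 statements merged into one kernel-verified Lean document; each statement's English description precedes it below -/
import Mathlib

section
/- For every δ̄ > 0 there exist constants K₁, K₂, K₃, K₄ > 0 such that for every d ≥ 1, every z ∈ ℝ^d and every δ ∈ ℝ^d with ‖δ‖_∞ ≤ δ̄, |φ(z; 0_d, 1) − φ(z − δ; 0_d, 1)| ≤ L̄_φ(z) ‖δ‖_∞, where L̄_φ(z) = Σ_{i=1}^d L_φ(z_i) ∏_{j<i} φ(z_j − δ_j) ∏_{j>i} φ(z_j), and L_φ(t) = K₁ e^{−(t+γ)} e^{−e^{−K₂(t+γ)}} if t > −γ, L_φ(t) = K₃ e^{−2(t+γ)} e^{−e^{−K₄(t+γ)}} otherwise. -/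
open MeasureTheory Real

/-- The standardized univariate Gumbel density `φ(z) = exp(−z − γ − e^{−(z+γ)})`. -/
noncomputable def gumbelPdf (z : ℝ) : ℝ :=
  Real.exp (-z - Real.eulerMascheroniConstant - Real.exp (-(z + Real.eulerMascheroniConstant)))

/-- The multivariate Gumbel density `φ(z; μ, σ) = ∏_j (1/σ) φ((z_j − μ_j)/σ)`. -/
noncomputable def mGumbelPdf {J : ℕ} (μ : Fin J → ℝ) (σ : ℝ) (z : Fin J → ℝ) : ℝ :=
  ∏ j, (1 / σ) * gumbelPdf ((z j - μ j) / σ)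

/-- The Lipschitz envelope `L_φ` for the univariate Gumbel density. -/
noncomputable def Lenv (K1 K2 K3 K4 : ℝ) (t : ℝ) : ℝ :=
  if t > -Real.eulerMascheroniConstant then
    K1 * Real.exp (-(t + Real.eulerMascheroniConstant)) *
      Real.exp (-Real.exp (-(K2 * (t + Real.eulerMascheroniConstant))))
  else
    K3 * Real.exp (-(2 * (t + Real.eulerMascheroniConstant))) *
      Real.exp (-Real.exp (-(K4 * (t + Real.eulerMascheroniConstant))))

/-!
Write `Λ t = exp (-(t + γ))`, so that `φ = Λ * exp (-Λ)` and `φ' = (Λ - 1) * φ`. A shift of the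
argument by at most `D` changes `Λ` by a factor at most `a = exp D`, whence
`|φ'| ≤ a² Λ t (Λ t + 1) exp (-Λ t / a)` on the ball of radius `D` around `t`. By AM-GM
`√(Λ t) ≤ Λ t / a + a / 4`, so at the price of a factor `exp (a / 4)` the last exponential may be
replaced by `exp (-√(Λ t))`, which no longer depends on `D`; this is the choice `K₂ = K₄ = 1/2`.
The mean value inequality gives the univariate estimate, and telescoping the difference of products
one coordinate at a time gives the multivariate one.
-/

theorem norm_prod_sub_prod_le_sum_ordered {ι R : Type*} [LinearOrder ι] [NormedCommRing R]
    [NormOneClass R] (s : Finset ι) (f g : ι → R) :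
    ‖∏ i ∈ s, f i - ∏ i ∈ s, g i‖ ≤
      ∑ i ∈ s, ‖f i - g i‖ * (∏ j ∈ s with j < i, ‖g j‖) * ∏ j ∈ s with i < j, ‖f j‖ := by
  have telescope : ∏ i ∈ s, f i - ∏ i ∈ s, g i =
      ∑ i ∈ s, (f i - g i) * (∏ j ∈ s with j < i, g j) * ∏ j ∈ s with i < j, f j := by
    have := Finset.prod_sub_ordered s f fun i => f i - g i
    simp only [sub_sub_cancel] at this
    rw [this, sub_sub_cancel]
  rw [telescope]
  refine norm_sum_le_of_le s fun i _ => (norm_mul₃_le ..).trans ?_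
  gcongr <;> exact Finset.norm_prod_le _ _

theorem le_sq_div_add_div_four {a : ℝ} (ha : 0 < a) (w : ℝ) : w ≤ w ^ 2 / a + a / 4 := by
  have square : w ^ 2 / a + a / 4 - w = (w - a / 2) ^ 2 / a := by
    field_simp
    ring
  have : 0 ≤ (w - a / 2) ^ 2 / a := by positivity
  linarith

/-- The function `Λ = -log F`, where `F t = exp (-exp (-(t + γ)))` is the distribution function of
the standardized Gumbel law. All estimates on the density are expressed through it. -/
noncomputable def gumbelNegLogCdf (t : ℝ) : ℝ :=
  exp (-(t + eulerMascheroniConstant))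

theorem gumbelNegLogCdf_pos (t : ℝ) : 0 < gumbelNegLogCdf t :=
  exp_pos _

theorem hasDerivAt_gumbelNegLogCdf (t : ℝ) :
    HasDerivAt gumbelNegLogCdf (-gumbelNegLogCdf t) t := by
  have exponent : HasDerivAt (fun x : ℝ => -(x + eulerMascheroniConstant)) (-1) t :=
    ((hasDerivAt_id t).add_const _).neg
  exact exponent.exp.congr_deriv (mul_neg_one _)

theorem gumbelNegLogCdf_le_exp_mul {D s t : ℝ} (h : t - s ≤ D) :
    gumbelNegLogCdf s ≤ exp D * gumbelNegLogCdf t := by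
  rw [gumbelNegLogCdf, gumbelNegLogCdf, ← exp_add]
  gcongr
  linarith

theorem gumbelPdf_eq (t : ℝ) :
    gumbelPdf t = gumbelNegLogCdf t * exp (-gumbelNegLogCdf t) := by
  rw [gumbelPdf, gumbelNegLogCdf, ← exp_add]
  ring_nf

theorem gumbelPdf_nonneg (t : ℝ) : 0 ≤ gumbelPdf t :=
  exp_nonneg _

theorem hasDerivAt_gumbelPdf (t : ℝ) :
    HasDerivAt gumbelPdf ((gumbelNegLogCdf t - 1) * gumbelPdf t) t := by
  have hΛ := hasDerivAt_gumbelNegLogCdf t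
  rw [funext gumbelPdf_eq]
  refine (hΛ.mul hΛ.neg.exp).congr_deriv ?_
  simp only [Pi.neg_apply]
  ring

theorem norm_deriv_gumbelPdf_le (t : ℝ) :
    ‖deriv gumbelPdf t‖ ≤
      gumbelNegLogCdf t * (gumbelNegLogCdf t + 1) * exp (-gumbelNegLogCdf t) := by
  have hΛ := gumbelNegLogCdf_pos t
  calc ‖deriv gumbelPdf t‖
      = ‖gumbelNegLogCdf t - 1‖ * gumbelPdf t := by
        rw [(hasDerivAt_gumbelPdf t).deriv, norm_mul, norm_of_nonneg (gumbelPdf_nonneg t)]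
    _ ≤ (gumbelNegLogCdf t + 1) * gumbelPdf t := by
        gcongr
        · exact gumbelPdf_nonneg t
        · exact abs_le.mpr ⟨by linarith, by linarith⟩
    _ = gumbelNegLogCdf t * (gumbelNegLogCdf t + 1) * exp (-gumbelNegLogCdf t) := by
        rw [gumbelPdf_eq]
        ring

theorem norm_deriv_gumbelPdf_le_of_abs_sub_le {D s t : ℝ} (h : |s - t| ≤ D) :
    ‖deriv gumbelPdf s‖ ≤
      exp D ^ 2 * (gumbelNegLogCdf t * (gumbelNegLogCdf t + 1)) *
        exp (-(gumbelNegLogCdf t / exp D)) := by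
  obtain ⟨hts, hst⟩ := abs_sub_le_iff.mp h
  have upper : gumbelNegLogCdf s ≤ exp D * gumbelNegLogCdf t := gumbelNegLogCdf_le_exp_mul hst
  have lower : gumbelNegLogCdf t / exp D ≤ gumbelNegLogCdf s :=
    (div_le_iff₀' (exp_pos D)).mpr (gumbelNegLogCdf_le_exp_mul hts)
  have one_le : 1 ≤ exp D := one_le_exp ((abs_nonneg _).trans h)
  have hs := gumbelNegLogCdf_pos s
  have ht := gumbelNegLogCdf_pos t
  calc ‖deriv gumbelPdf s‖
      ≤ gumbelNegLogCdf s * (gumbelNegLogCdf s + 1) * exp (-gumbelNegLogCdf s) :=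
        norm_deriv_gumbelPdf_le s
    _ ≤ exp D * gumbelNegLogCdf t * (exp D * gumbelNegLogCdf t + exp D) *
          exp (-(gumbelNegLogCdf t / exp D)) := by gcongr
    _ = exp D ^ 2 * (gumbelNegLogCdf t * (gumbelNegLogCdf t + 1)) *
          exp (-(gumbelNegLogCdf t / exp D)) := by ring

theorem exp_neg_gumbelNegLogCdf_div_le {a : ℝ} (ha : 0 < a) (t : ℝ) :
    exp (-(gumbelNegLogCdf t / a)) ≤
      exp (a / 4) * exp (-exp (-(1 / 2 * (t + eulerMascheroniConstant)))) := by
  have sqrt_sq : exp (-(1 / 2 * (t + eulerMascheroniConstant))) ^ 2 = gumbelNegLogCdf t := by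
    rw [gumbelNegLogCdf, ← exp_nat_mul]
    ring_nf
  have amgm := le_sq_div_add_div_four ha (exp (-(1 / 2 * (t + eulerMascheroniConstant))))
  rw [sqrt_sq] at amgm
  rw [← exp_add]
  gcongr
  linarith

theorem Lenv_nonneg {K₁ K₃ : ℝ} (h₁ : 0 ≤ K₁) (h₃ : 0 ≤ K₃) (K₂ K₄ t : ℝ) :
    0 ≤ Lenv K₁ K₂ K₃ K₄ t := by
  unfold Lenv
  split_ifs <;> positivity

theorem mul_le_Lenv {K : ℝ} (hK : 0 ≤ K) (κ t : ℝ) :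
    K * (gumbelNegLogCdf t * (gumbelNegLogCdf t + 1)) *
        exp (-exp (-(κ * (t + eulerMascheroniConstant)))) ≤
      Lenv (2 * K) κ (2 * K) κ t := by
  have hΛ := gumbelNegLogCdf_pos t
  unfold Lenv
  split_ifs with ht
  · have le_one : gumbelNegLogCdf t ≤ 1 := exp_le_one_iff.mpr (by linarith)
    have envelope : gumbelNegLogCdf t * (gumbelNegLogCdf t + 1) ≤ 2 * gumbelNegLogCdf t := by
      nlinarith
    rw [← gumbelNegLogCdf, mul_comm 2 K, mul_assoc K 2]
    gcongr
  · have one_le : 1 ≤ gumbelNegLogCdf t := one_le_exp (by linarith)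
    have exp_neg_two_mul : exp (-(2 * (t + eulerMascheroniConstant))) = gumbelNegLogCdf t ^ 2 := by
      rw [gumbelNegLogCdf, ← exp_nat_mul]
      ring_nf
    have envelope : gumbelNegLogCdf t * (gumbelNegLogCdf t + 1) ≤ 2 * gumbelNegLogCdf t ^ 2 := by
      nlinarith
    rw [exp_neg_two_mul, mul_comm 2 K, mul_assoc K 2]
    gcongr

/-- The common value `2 a² exp (a / 4)`, `a = exp D`, of the constants `K₁` and `K₃` in the
Lipschitz envelope for shifts of size at most `D`. -/
noncomputable def gumbelLipschitzFactor (D : ℝ) : ℝ :=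
  2 * (exp D ^ 2 * exp (exp D / 4))

theorem gumbelLipschitzFactor_pos (D : ℝ) : 0 < gumbelLipschitzFactor D := by
  unfold gumbelLipschitzFactor
  positivity

theorem norm_deriv_gumbelPdf_le_Lenv {D s t : ℝ} (h : |s - t| ≤ D) :
    ‖deriv gumbelPdf s‖ ≤
      Lenv (gumbelLipschitzFactor D) (1 / 2) (gumbelLipschitzFactor D) (1 / 2) t := by
  have ht := gumbelNegLogCdf_pos t
  calc ‖deriv gumbelPdf s‖
      ≤ exp D ^ 2 * (gumbelNegLogCdf t * (gumbelNegLogCdf t + 1)) *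
          exp (-(gumbelNegLogCdf t / exp D)) := norm_deriv_gumbelPdf_le_of_abs_sub_le h
    _ ≤ exp D ^ 2 * (gumbelNegLogCdf t * (gumbelNegLogCdf t + 1)) *
          (exp (exp D / 4) * exp (-exp (-(1 / 2 * (t + eulerMascheroniConstant))))) := by
        gcongr
        exact exp_neg_gumbelNegLogCdf_div_le (exp_pos D) t
    _ = exp D ^ 2 * exp (exp D / 4) * (gumbelNegLogCdf t * (gumbelNegLogCdf t + 1)) *
          exp (-exp (-(1 / 2 * (t + eulerMascheroniConstant)))) := by ring
    _ ≤ Lenv (gumbelLipschitzFactor D) (1 / 2) (gumbelLipschitzFactor D) (1 / 2) t :=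
        mul_le_Lenv (by positivity) _ t

theorem norm_gumbelPdf_sub_le {D s t : ℝ} (h : ‖t - s‖ ≤ D) :
    ‖gumbelPdf t - gumbelPdf s‖ ≤
      Lenv (gumbelLipschitzFactor D) (1 / 2) (gumbelLipschitzFactor D) (1 / 2) t * ‖t - s‖ :=
  (convex_closedBall t D).norm_image_sub_le_of_norm_deriv_le
    (fun x _ => (hasDerivAt_gumbelPdf x).differentiableAt)
    (fun _ hx => norm_deriv_gumbelPdf_le_Lenv hx)
    (mem_closedBall_iff_norm'.mpr h)
    (Metric.mem_closedBall_self ((norm_nonneg _).trans h))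

theorem mGumbelPdf_one {d : ℕ} (μ z : Fin d → ℝ) :
    mGumbelPdf μ 1 z = ∏ j, gumbelPdf (z j - μ j) := by
  simp only [mGumbelPdf, div_one, one_mul]

/-- Local Lipschitz continuity of the multivariate Gumbel density in location, with an
explicit envelope. -/
theorem mgumbel_locally_lipschitz_location (δbar : ℝ) (hδbar : 0 < δbar) :
    ∃ K1 K2 K3 K4 : ℝ, 0 < K1 ∧ 0 < K2 ∧ 0 < K3 ∧ 0 < K4 ∧
      ∀ (d : ℕ), 1 ≤ d → ∀ z δ : Fin d → ℝ, ‖δ‖ ≤ δbar →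
        |mGumbelPdf (fun _ => 0) 1 z - mGumbelPdf (fun _ => 0) 1 (z - δ)| ≤
          (∑ i, Lenv K1 K2 K3 K4 (z i) *
            (∏ j ∈ Finset.univ.filter (fun j => j < i), gumbelPdf (z j - δ j)) *
            (∏ j ∈ Finset.univ.filter (fun j => i < j), gumbelPdf (z j))) * ‖δ‖ := by
  have factor_pos := gumbelLipschitzFactor_pos δbar
  refine ⟨gumbelLipschitzFactor δbar, 1 / 2, gumbelLipschitzFactor δbar, 1 / 2,
    factor_pos, by norm_num, factor_pos, by norm_num, fun d _ z δ hδ => ?_⟩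
  have coordinate_bound (i : Fin d) : ‖gumbelPdf (z i) - gumbelPdf (z i - δ i)‖ ≤
      Lenv (gumbelLipschitzFactor δbar) (1 / 2) (gumbelLipschitzFactor δbar) (1 / 2) (z i) *
        ‖δ‖ := by
    have hδi : ‖δ i‖ ≤ ‖δ‖ := norm_le_pi_norm δ i
    have lipschitz := norm_gumbelPdf_sub_le (D := δbar) (s := z i - δ i) (t := z i)
      (by rw [sub_sub_cancel]; exact hδi.trans hδ)
    rw [sub_sub_cancel] at lipschitz
    exact lipschitz.trans
      (mul_le_mul_of_nonneg_left hδi (Lenv_nonneg factor_pos.le factor_pos.le _ _ _))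
  have telescoped := norm_prod_sub_prod_le_sum_ordered Finset.univ
    (fun j => gumbelPdf (z j)) (fun j => gumbelPdf (z j - δ j))
  simp only [norm_of_nonneg (gumbelPdf_nonneg _)] at telescoped
  simp only [mGumbelPdf_one, sub_zero, Pi.sub_apply, Finset.sum_mul, mul_right_comm _ _ ‖δ‖]
  refine telescoped.trans (Finset.sum_le_sum fun i _ => ?_)
  gcongr
  exacts [Finset.prod_nonneg fun _ _ => gumbelPdf_nonneg _,
    Finset.prod_nonneg fun _ _ => gumbelPdf_nonneg _, coordinate_bound i]
end

section
/- Consider the Bellman operator T : ℝ^K → ℝ^K of the dynamic discrete choice model with a Gumbel-mixture shock distribution, given by T(Q)(x) = Σ_{k=1}^m ω_k σ_k [A_{kx}(Q) + E1(e^{−a_{kx}(Q)})], where A_{kx}(Q) = log Σ_{j=1}^J exp((u(x,j) + β Σ_{y=1}^K G^j_{xy} Q(y) + μ_{jk})/σ_k) and a_{kx}(Q) = (u(x,0) + β Σ_{y=1}^K G^0_{xy} Q(y))/σ_k + γ − A_{kx}(Q). Then T is differentiable and its Jacobian satisfies ∂T(Q)(x)/∂Q(y) = β Σ_{d=0}^J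 G^d_{xy} p(d|x;Q), where p(0|x;Q) = Σ_{k=1}^m ω_k exp(−e^{−a_{kx}(Q)}) and, for d = 1,…,J, p(d|x;Q) = Σ_{k=1}^m ω_k exp((u(x,d) + β Σ_y G^d_{xy} Q(y) + μ_{dk})/σ_k − A_{kx}(Q)) (1 − exp(−e^{−a_{kx}(Q)})). -/
open MeasureTheory Real

/-- The exponential integral `E1(z) = ∫_z^∞ e^{−t}/t dt`. -/
noncomputable def E1 (z : ℝ) : ℝ := ∫ t in Set.Ioi z, Real.exp (-t) / t

/-!
Within a mixture component the best inside alternative is again Gumbel distributed, so the expected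
maximum is `A + E1 (exp (-a))` with `A` a log-sum-exp. Since `E1' z = -exp (-z) / z`, the map
`a ↦ E1 (exp (-a))` has derivative `exp (-exp (-a))`, the probability of the outside option, while
`A` differentiates to the softmax weights. By the chain rule the gradient of the expected maximum in
the choice values is the vector of choice probabilities (the Williams–Daly–Zachary theorem).
Mixtures inherit this, the factor `σ` cancelling the `1 / σ` of the argument, and the Jacobian
follows since the choice values are affine in `Q` with linear part `β G d`.
-/

open scoped Matrix

theorem hasDerivAt_integral_Ioi {F : Type*} [NormedAddCommGroup F] [NormedSpace ℝ F]
    [CompleteSpace F] {f : ℝ → F} {c z : ℝ} (hf : IntegrableOn f (Set.Ioi c)) (hcz : c < z)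
    (hfz : ContinuousAt f z) :
    HasDerivAt (fun w => ∫ t in Set.Ioi w, f t) (-f z) z := by
  have h_eq : (fun w => ∫ t in Set.Ioi w, f t) =ᶠ[nhds z]
      fun w => (∫ t in Set.Ioi c, f t) - ∫ t in c..w, f t := by
    filter_upwards [lt_mem_nhds hcz] with w hw
    rw [← intervalIntegral.integral_Ioi_sub_Ioi hf hw.le, sub_sub_cancel]
  have h_int : IntervalIntegrable f volume c z :=
    (intervalIntegrable_iff_integrableOn_Ioc_of_le hcz.le).2
      (hf.mono_set Set.Ioc_subset_Ioi_self)
  have h_meas : StronglyMeasurableAtFilter f (nhds z) :=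
    AEStronglyMeasurable.stronglyMeasurableAtFilter_of_mem hf.aestronglyMeasurable
      (Ioi_mem_nhds hcz)
  exact ((intervalIntegral.integral_hasDerivAt_right h_int h_meas hfz).const_sub _)
    |>.congr_of_eventuallyEq h_eq

theorem integrableOn_Ioi_exp_neg_div {c : ℝ} (hc : 0 < c) :
    IntegrableOn (fun t : ℝ => exp (-t) / t) (Set.Ioi c) := by
  refine ((integrableOn_exp_neg_Ioi c).mul_const c⁻¹).mono'
    (Measurable.aestronglyMeasurable (by fun_prop))
    ((ae_restrict_iff' measurableSet_Ioi).2 (.of_forall fun t (hct : c < t) => ?_))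
  rw [norm_of_nonneg (div_nonneg (exp_pos _).le (hc.trans hct).le), div_eq_mul_inv]
  gcongr

theorem hasDerivAt_E1 {z : ℝ} (hz : 0 < z) : HasDerivAt E1 (-(exp (-z) / z)) z :=
  hasDerivAt_integral_Ioi (integrableOn_Ioi_exp_neg_div (half_pos hz)) (half_lt_self hz)
    (ContinuousAt.div (by fun_prop) continuousAt_id hz.ne')

theorem hasDerivAt_E1_exp_neg (a : ℝ) :
    HasDerivAt (fun a => E1 (exp (-a))) (exp (-exp (-a))) a := by
  refine ((hasDerivAt_E1 (exp_pos (-a))).comp a (hasDerivAt_neg a).exp).congr_deriv ?_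
  rw [mul_neg_one, mul_neg, neg_mul, neg_neg, div_mul_cancel₀ _ (exp_pos _).ne']

section GumbelSurplus

variable {ι E : Type*} [Fintype ι] [NormedAddCommGroup E] [NormedSpace ℝ E]

/-- The log-sum-exp function, the expected maximum of the `v j` perturbed by independent centred
standard Gumbel shocks. -/
noncomputable def logSumExp (v : ι → ℝ) : ℝ := log (∑ j, exp (v j))

/-- The quantity `a` of the model: the value `v₀` of the outside option relative to the location
`logSumExp v - γ` of the best inside alternative. -/
noncomputable def outsideAdvantage (v₀ : ℝ) (v : ι → ℝ) : ℝ :=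
  v₀ + eulerMascheroniConstant - logSumExp v

/-- The expected maximum of an outside option with unperturbed value `v₀` and inside alternatives
`v j` perturbed by independent centred standard Gumbel shocks, in closed form. -/
noncomputable def gumbelSurplus (v₀ : ℝ) (v : ι → ℝ) : ℝ :=
  logSumExp v + E1 (exp (-outsideAdvantage v₀ v))

/-- The probability that the outside option attains the maximum described in `gumbelSurplus`. -/
noncomputable def gumbelOutsideProb (v₀ : ℝ) (v : ι → ℝ) : ℝ :=
  exp (-exp (-outsideAdvantage v₀ v))

/-- The probability that the inside alternative `j` attains the maximum described in
`gumbelSurplus`. -/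
noncomputable def gumbelInsideProb (v₀ : ℝ) (v : ι → ℝ) (j : ι) : ℝ :=
  exp (v j - logSumExp v) * (1 - gumbelOutsideProb v₀ v)

theorem hasFDerivAt_logSumExp [Nonempty ι] {v : ι → E → ℝ} {v' : ι → E →L[ℝ] ℝ} {q : E}
    (hv : ∀ j, HasFDerivAt (v j) (v' j) q) :
    HasFDerivAt (fun q => logSumExp fun j => v j q)
      (∑ j, exp (v j q - logSumExp fun i => v i q) • v' j) q := by
  have hpos : 0 < ∑ i, exp (v i q) :=
    Finset.sum_pos (fun i _ => exp_pos _) Finset.univ_nonempty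
  refine ((HasFDerivAt.fun_sum fun j _ => (hv j).exp).log hpos.ne').congr_fderiv ?_
  simp only [logSumExp, Finset.smul_sum, smul_smul, exp_sub, exp_log hpos, div_eq_inv_mul]

theorem hasFDerivAt_gumbelSurplus [Nonempty ι] {v₀ : E → ℝ} {v₀' : E →L[ℝ] ℝ}
    {v : ι → E → ℝ} {v' : ι → E →L[ℝ] ℝ} {q : E}
    (hv₀ : HasFDerivAt v₀ v₀' q) (hv : ∀ j, HasFDerivAt (v j) (v' j) q) :
    HasFDerivAt (fun q => gumbelSurplus (v₀ q) fun j => v j q)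
      (gumbelOutsideProb (v₀ q) (fun j => v j q) • v₀' +
        ∑ j, gumbelInsideProb (v₀ q) (fun j => v j q) j • v' j) q := by
  have h_lse := hasFDerivAt_logSumExp hv
  have h_adv := (hv₀.add_const eulerMascheroniConstant).fun_sub h_lse
  refine (h_lse.add ((hasDerivAt_E1_exp_neg _).comp_hasFDerivAt q h_adv)).congr_fderiv ?_
  simp only [gumbelInsideProb, mul_comm (exp _), mul_smul, ← Finset.smul_sum]
  rw [gumbelOutsideProb, outsideAdvantage]
  module

end GumbelSurplus

/-- A finite mixture of products of Gumbel distributions, given by its parameters alone, without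
the constraints that make it a probability distribution: under component `k`, of weight `weight k`,
the shock to alternative `j` is `location k j + scale k * ε j`, with the `ε j` independent centred
standard Gumbel. -/
structure GumbelMixture (κ ι : Type*) where
  weight : κ → ℝ
  location : κ → ι → ℝ
  scale : κ → ℝ

/-- The values `u x + β ∑ y, G x y * Q y`, in each state `x`, of an action with flow utility `u`
and transition matrix `G`, given expected continuation values `Q`. -/
def choiceValue {X : Type*} [Fintype X] (u : X → ℝ) (β : ℝ) (G : Matrix X X ℝ) (Q : X → ℝ) :
    X → ℝ :=
  u + β • G *ᵥ Q

theorem hasFDerivAt_choiceValue {X : Type*} [Fintype X] (u : X → ℝ) (β : ℝ) (G : Matrix X X ℝ)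
    (Q : X → ℝ) :
    HasFDerivAt (choiceValue u β G) (β • G.mulVecLin.toContinuousLinearMap) Q :=
  ((G.mulVecLin.toContinuousLinearMap.hasFDerivAt (x := Q)).const_smul β).const_add u

namespace GumbelMixture

variable {κ ι E X : Type*} [Fintype κ] [Fintype ι] [NormedAddCommGroup E] [NormedSpace ℝ E]
  [Fintype X] (F : GumbelMixture κ ι)

/-- The expected maximum of an outside option with unperturbed value `v₀` and inside alternatives
`v j` perturbed by shocks distributed as `F`, in closed form. -/
noncomputable def surplus (v₀ : ℝ) (v : ι → ℝ) : ℝ :=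
  ∑ k, F.weight k * F.scale k *
    gumbelSurplus (v₀ / F.scale k) fun j => (v j + F.location k j) / F.scale k

/-- The choice probability of the outside option under shocks distributed as `F`. -/
noncomputable def outsideProb (v₀ : ℝ) (v : ι → ℝ) : ℝ :=
  ∑ k, F.weight k *
    gumbelOutsideProb (v₀ / F.scale k) fun j => (v j + F.location k j) / F.scale k

/-- The choice probability of the inside alternative `d` under shocks distributed as `F`. -/
noncomputable def insideProb (v₀ : ℝ) (v : ι → ℝ) (d : ι) : ℝ :=
  ∑ k, F.weight k *
    gumbelInsideProb (v₀ / F.scale k) (fun j => (v j + F.location k j) / F.scale k) d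

variable {F} in
theorem hasFDerivAt_surplus [Nonempty ι] (hF : ∀ k, F.scale k ≠ 0)
    {v₀ : E → ℝ} {v₀' : E →L[ℝ] ℝ} {v : ι → E → ℝ} {v' : ι → E →L[ℝ] ℝ} {q : E}
    (hv₀ : HasFDerivAt v₀ v₀' q) (hv : ∀ j, HasFDerivAt (v j) (v' j) q) :
    HasFDerivAt (fun q => F.surplus (v₀ q) fun j => v j q)
      (F.outsideProb (v₀ q) (fun j => v j q) • v₀' +
        ∑ d, F.insideProb (v₀ q) (fun j => v j q) d • v' d) q := by
  have h_component (k : κ) := (hasFDerivAt_gumbelSurplus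
    (hv₀.mul_const (F.scale k)⁻¹)
    (fun j => ((hv j).add_const (F.location k j)).mul_const (F.scale k)⁻¹)).const_mul
      (F.weight k * F.scale k)
  simp only [← div_eq_mul_inv] at h_component
  refine (HasFDerivAt.fun_sum fun k _ => h_component k).congr_fderiv ?_
  have h_cancel (k : κ) (P : ℝ) (L : E →L[ℝ] ℝ) :
      (F.weight k * F.scale k) • P • (F.scale k)⁻¹ • L = (F.weight k * P) • L := by
    rw [smul_smul, smul_smul, mul_right_comm, mul_inv_cancel_right₀ (hF k)]
  simp only [outsideProb, insideProb, smul_add, Finset.smul_sum, h_cancel, Finset.sum_smul,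
    Finset.sum_add_distrib]
  rw [Finset.sum_comm]

variable (u₀ : X → ℝ) (u : ι → X → ℝ) (β : ℝ) (G₀ : Matrix X X ℝ) (G : ι → Matrix X X ℝ)

/-- The Bellman operator of the dynamic discrete choice model with shocks distributed as `F`; the
utilities and transition matrices are `u₀` and `G₀` for the outside option, `u d` and `G d` for the
inside alternative `d`. -/
noncomputable def bellmanOperator (Q : X → ℝ) (x : X) : ℝ :=
  F.surplus (choiceValue u₀ β G₀ Q x) fun d => choiceValue (u d) β (G d) Q x

/-- The conditional choice probability `p(0|x;Q)` of the outside option. -/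
noncomputable def conditionalOutsideProb (Q : X → ℝ) (x : X) : ℝ :=
  F.outsideProb (choiceValue u₀ β G₀ Q x) fun d => choiceValue (u d) β (G d) Q x

/-- The conditional choice probability `p(d|x;Q)` of the inside alternative `d`. -/
noncomputable def conditionalInsideProb (Q : X → ℝ) (d : ι) (x : X) : ℝ :=
  F.insideProb (choiceValue u₀ β G₀ Q x) (fun j => choiceValue (u j) β (G j) Q x) d

/-- The transition matrix of the state when actions are drawn from the conditional choice
probabilities at `Q`. -/
noncomputable def policyTransition [DecidableEq X] (Q : X → ℝ) : Matrix X X ℝ :=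
  .diagonal (F.conditionalOutsideProb u₀ u β G₀ G Q) * G₀ +
    ∑ d, .diagonal (F.conditionalInsideProb u₀ u β G₀ G Q d) * G d

variable {F} in
theorem hasFDerivAt_bellmanOperator [Nonempty ι] [DecidableEq X] (hF : ∀ k, F.scale k ≠ 0)
    (Q : X → ℝ) :
    HasFDerivAt (F.bellmanOperator u₀ u β G₀ G)
      (β • (F.policyTransition u₀ u β G₀ G Q).mulVecLin.toContinuousLinearMap) Q := by
  refine hasFDerivAt_pi'.2 fun x => ?_
  have h_value (u : X → ℝ) (G : Matrix X X ℝ) :=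
    hasFDerivAt_pi'.1 (hasFDerivAt_choiceValue u β G Q) x
  refine (hasFDerivAt_surplus hF (h_value u₀ G₀) fun d => h_value (u d) (G d)).congr_fderiv ?_
  ext R
  simp [policyTransition, conditionalOutsideProb, conditionalInsideProb, -Matrix.mulVec_mulVec,
    Matrix.mulVec_diagonal, Finset.mul_sum, mul_left_comm]

end GumbelMixture

theorem bellman_operator_jacobian_general {κ ι X : Type*} [Fintype κ] [Fintype ι] [Nonempty ι]
    [Fintype X] [DecidableEq X] {F : GumbelMixture κ ι} (hF : ∀ k, F.scale k ≠ 0)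
    (u₀ : X → ℝ) (u : ι → X → ℝ) (β : ℝ) (G₀ : Matrix X X ℝ) (G : ι → Matrix X X ℝ) :
    Differentiable ℝ (F.bellmanOperator u₀ u β G₀ G) ∧
      ∀ (Q : X → ℝ) (x y : X),
        fderiv ℝ (F.bellmanOperator u₀ u β G₀ G) Q (Pi.single y 1) x =
          β * (G₀ x y * F.conditionalOutsideProb u₀ u β G₀ G Q x +
            ∑ d, G d x y * F.conditionalInsideProb u₀ u β G₀ G Q d x) := by
  have h_deriv := GumbelMixture.hasFDerivAt_bellmanOperator u₀ u β G₀ G hF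
  refine ⟨fun Q => (h_deriv Q).differentiableAt, fun Q x y => ?_⟩
  simp [(h_deriv Q).fderiv, GumbelMixture.policyTransition, Matrix.mulVec_diagonal, mul_add,
    mul_comm]

/-- The Bellman operator of the dynamic discrete choice model with Gumbel-mixture shocks is
differentiable and its Jacobian is `∂T(Q)(x)/∂Q(y) = β Σ_d G^d_{xy} p(d|x;Q)`. -/
theorem bellman_operator_jacobian
    (K J m : ℕ) (hK : 1 ≤ K) (hJ : 1 ≤ J) (hm : 1 ≤ m)
    (u : Fin K → Fin (J + 1) → ℝ) (β : ℝ) (hβ0 : 0 ≤ β) (hβ1 : β < 1)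
    (G : Fin (J + 1) → Fin K → Fin K → ℝ)
    (hGpos : ∀ d x y, 0 ≤ G d x y) (hGsum : ∀ d x, ∑ y, G d x y = 1)
    (ω : Fin m → ℝ) (μ : Fin m → Fin J → ℝ) (σ : Fin m → ℝ)
    (hω : ∀ k, 0 < ω k) (hωsum : ∑ k, ω k = 1) (hσ : ∀ k, 0 < σ k)
    -- the quantities `A_{kx}(Q)` and `a_{kx}(Q)`
    (A a : Fin m → Fin K → (Fin K → ℝ) → ℝ)
    (hA : ∀ k x Q, A k x Q =
      Real.log (∑ j : Fin J,
        Real.exp ((u x j.succ + β * ∑ y, G j.succ x y * Q y + μ k j) / σ k)))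
    (ha : ∀ k x Q, a k x Q =
      (u x 0 + β * ∑ y, G 0 x y * Q y) / σ k + Real.eulerMascheroniConstant - A k x Q)
    -- the conditional choice probabilities `p(d|x;Q)`
    (p : Fin (J + 1) → Fin K → (Fin K → ℝ) → ℝ)
    (hp0 : ∀ x Q, p 0 x Q = ∑ k, ω k * Real.exp (-Real.exp (-a k x Q)))
    (hpd : ∀ (d : Fin J) x Q, p d.succ x Q =
      ∑ k, ω k * Real.exp ((u x d.succ + β * ∑ y, G d.succ x y * Q y + μ k d) / σ k - A k x Q) *
        (1 - Real.exp (-Real.exp (-a k x Q))))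
    -- the Bellman operator `T`
    (T : (Fin K → ℝ) → (Fin K → ℝ))
    (hT : ∀ Q x, T Q x = ∑ k, ω k * σ k * (A k x Q + E1 (Real.exp (-a k x Q)))) :
    Differentiable ℝ T ∧
      ∀ (Q : Fin K → ℝ) (x y : Fin K),
        fderiv ℝ T Q (Pi.single y 1) x = β * ∑ d : Fin (J + 1), G d x y * p d x Q := by
  have : Nonempty (Fin J) := ⟨⟨0, hJ⟩⟩
  obtain rfl : T = GumbelMixture.bellmanOperator ⟨ω, μ, σ⟩ (u · 0) (fun d x => u x d.succ) β (G 0)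
      (fun d => G d.succ) := by
    ext Q x
    simp only [hT, ha, hA]
    rfl
  simp only [Fin.sum_univ_succ, hp0, hpd, ha, hA, mul_assoc]
  exact bellman_operator_jacobian_general (F := ⟨ω, μ, σ⟩) (fun k => (hσ k).ne') (u · 0)
    (fun d x => u x d.succ) β (G 0) (fun d => G d.succ)
end

section
/- Let μ ∈ ℝ, σ > 0 and M ∈ ℝ, and set b = (M − μ)/σ + γ. Then ∫_M^∞ x φ(x; μ, σ) dx = μ − M exp(−e^{−b}) + σ E1(e^{−b}). -/
open MeasureTheory Real

/-!
The substitution `t = e^{-(z+γ)}` turns the standardized Gumbel density into `e^{-t} dt`, so its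
truncated moments become integrals of `e^{-t}` and `log t · e^{-t}` over `(0, a)` with
`a = e^{-(m+γ)}`. The full integral of `log t · e^{-t}` over `(0, ∞)` is `Γ'(1) = -γ`, and its tail
beyond `a` is expressed through `E1` by integration by parts. The two occurrences of `γ`, one from
`Γ'(1)` and one from `z = -log t - γ`, cancel. The general case is the affine change of variable
`x = μ + σz`.
-/

open Set Filter Topology

section LogExp

theorem hasDerivAt_Gamma_integral_log {s : ℝ} (hs : 0 < s) :
    HasDerivAt Gamma (∫ t in Ioi (0 : ℝ), t ^ (s - 1) * (log t * exp (-t))) s := by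
  have heq : Complex.Gamma =ᶠ[𝓝 (s : ℂ)] Complex.GammaIntegral := by
    filter_upwards [(isOpen_lt continuous_const Complex.continuous_re).mem_nhds
      (show (0 : ℝ) < (s : ℂ).re from hs)] with z hz
    exact Complex.Gamma_eq_integral hz
  have hcast : ∫ t : ℝ in Ioi 0, (t : ℂ) ^ ((s : ℂ) - 1) * (log t * exp (-t)) =
      ((∫ t in Ioi (0 : ℝ), t ^ (s - 1) * (log t * exp (-t)) : ℝ) : ℂ) := by
    rw [← integral_complex_ofReal]
    refine setIntegral_congr_fun measurableSet_Ioi fun t ht => ?_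
    simp [Complex.ofReal_cpow (le_of_lt ht)]
  have hderiv := ((Complex.hasDerivAt_GammaIntegral (s := s) hs).congr_of_eventuallyEq
    heq).real_of_complex
  rwa [hcast, Complex.ofReal_re] at hderiv

theorem integral_log_mul_exp_neg_Ioi_zero :
    ∫ t in Ioi (0 : ℝ), log t * exp (-t) = -eulerMascheroniConstant := by
  simpa using (hasDerivAt_Gamma_integral_log one_pos).unique hasDerivAt_Gamma_one

-- A non-integrable function has integral `0` by convention, but here the integral is `-γ ≠ 0`.
theorem integrableOn_log_mul_exp_neg_Ioi_zero :
    IntegrableOn (fun t => log t * exp (-t)) (Ioi 0) := by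
  refine Integrable.of_integral_ne_zero ?_
  rw [integral_log_mul_exp_neg_Ioi_zero]
  linarith [one_half_lt_eulerMascheroniConstant]

theorem integrableOn_exp_neg_div_Ioi {a : ℝ} (ha : 0 < a) :
    IntegrableOn (fun t => exp (-t) / t) (Ioi a) := by
  refine ((integrableOn_exp_neg_Ioi a).const_mul a⁻¹).mono'
    (by fun_prop : Measurable fun t : ℝ => exp (-t) / t).aestronglyMeasurable ?_
  filter_upwards [ae_restrict_mem measurableSet_Ioi] with t (hat : a < t)
  rw [norm_of_nonneg (div_nonneg (exp_pos _).le (ha.trans hat).le), div_eq_inv_mul]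
  gcongr

theorem tendsto_log_mul_exp_neg_atTop :
    Tendsto (fun t => log t * exp (-t)) atTop (𝓝 0) :=
  (isLittleO_log_id_atTop.isBigO.mul (Asymptotics.isBigO_refl _ _)).trans_tendsto
    (by simpa using tendsto_pow_mul_exp_neg_atTop_nhds_zero 1)

theorem integral_log_mul_exp_neg_Ioi {a : ℝ} (ha : 0 < a) :
    ∫ t in Ioi a, log t * exp (-t) = log a * exp (-a) + E1 a := by
  have hlog : IntegrableOn (fun t => log t * exp (-t)) (Ioi a) :=
    integrableOn_log_mul_exp_neg_Ioi_zero.mono_set (Ioi_subset_Ioi ha.le)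
  have hdiv := integrableOn_exp_neg_div_Ioi ha
  have hderiv : ∀ t ∈ Ici a, HasDerivAt (fun t => log t * exp (-t))
      (exp (-t) / t - log t * exp (-t)) t := fun t ht =>
    ((hasDerivAt_log (ha.trans_le ht).ne').mul (hasDerivAt_neg t).exp).congr_deriv (by ring)
  have hFTC := integral_Ioi_of_hasDerivAt_of_tendsto' hderiv (hdiv.sub hlog)
    tendsto_log_mul_exp_neg_atTop
  rw [integral_sub hdiv hlog, ← E1] at hFTC
  linarith

theorem integral_log_mul_exp_neg {a : ℝ} (ha : 0 < a) :
    ∫ t in (0 : ℝ)..a, log t * exp (-t) =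
      -eulerMascheroniConstant - log a * exp (-a) - E1 a := by
  rw [← intervalIntegral.integral_Ioi_sub_Ioi integrableOn_log_mul_exp_neg_Ioi_zero ha.le,
    integral_log_mul_exp_neg_Ioi_zero, integral_log_mul_exp_neg_Ioi ha]
  ring

end LogExp

section Substitution

variable {E : Type*} [NormedAddCommGroup E] [NormedSpace ℝ E]

theorem image_exp_neg_add_Ioi (a c : ℝ) :
    (fun x => exp (-(x + c))) '' Ioi a = Ioo 0 (exp (-(a + c))) := by
  rw [← image_image (fun y => exp (-y)) (· + c), ← image_image exp Neg.neg, image_add_const_Ioi,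
    image_neg_Ioi, image_exp_Iio]

theorem hasDerivAt_exp_neg_add (c x : ℝ) :
    HasDerivAt (fun x => exp (-(x + c))) (-exp (-(x + c))) x :=
  ((hasDerivAt_id' x).add_const c).neg.exp.congr_deriv (by simp)

theorem antitone_exp_neg_add (c : ℝ) : Antitone fun x => exp (-(x + c)) :=
  fun x y hxy => by dsimp only; gcongr

theorem integral_comp_exp_neg_add_Ioi (g : ℝ → E) (a c : ℝ) :
    ∫ x in Ioi a, exp (-(x + c)) • g (exp (-(x + c))) = ∫ t in (0 : ℝ)..exp (-(a + c)), g t := by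
  rw [intervalIntegral.integral_of_le (exp_pos _).le, integral_Ioc_eq_integral_Ioo,
    ← image_exp_neg_add_Ioi, integral_image_eq_integral_deriv_smul_of_antitoneOn measurableSet_Ioi
      (fun x _ => (hasDerivAt_exp_neg_add c x).hasDerivWithinAt)
      ((antitone_exp_neg_add c).antitoneOn _)]
  simp only [neg_neg]

theorem integrableOn_comp_exp_neg_add_Ioi (g : ℝ → E) (a c : ℝ) :
    IntegrableOn (fun x => exp (-(x + c)) • g (exp (-(x + c)))) (Ioi a) ↔
      IntegrableOn g (Ioo 0 (exp (-(a + c)))) := by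
  rw [← image_exp_neg_add_Ioi, integrableOn_image_iff_integrableOn_deriv_smul_of_antitoneOn
    measurableSet_Ioi (fun x _ => (hasDerivAt_exp_neg_add c x).hasDerivWithinAt)
    ((antitone_exp_neg_add c).antitoneOn _)]
  simp only [neg_neg]

theorem integral_comp_sub_div_Ioi (g : ℝ → E) (a μ : ℝ) {σ : ℝ} (hσ : 0 < σ) :
    ∫ x in Ioi a, g ((x - μ) / σ) = σ • ∫ z in Ioi ((a - μ) / σ), g z := by
  have hshift := (measurePreserving_sub_right volume μ).setIntegral_preimage_emb
    (measurableEmbedding_subRight μ) (fun y => g (y / σ)) (Ioi (a - μ))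
  rw [preimage_sub_const_Ioi, sub_add_cancel] at hshift
  simp_rw [hshift, div_eq_mul_inv]
  rw [integral_comp_mul_right_Ioi g (a - μ) (inv_pos.2 hσ), inv_inv]

theorem integral_mul_comp_sub_div_Ioi (f : ℝ → ℝ) (a μ : ℝ) {σ : ℝ} (hσ : 0 < σ) :
    ∫ x in Ioi a, x * ((1 / σ) * f ((x - μ) / σ)) =
      ∫ z in Ioi ((a - μ) / σ), (μ + σ * z) * f z := by
  calc ∫ x in Ioi a, x * ((1 / σ) * f ((x - μ) / σ))
      = ∫ x in Ioi a, (1 / σ) * ((μ + σ * ((x - μ) / σ)) * f ((x - μ) / σ)) := by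
        congr! 2 with x
        field_simp
        ring
    _ = ∫ z in Ioi ((a - μ) / σ), (μ + σ * z) * f z := by
        rw [integral_const_mul, integral_comp_sub_div_Ioi (fun z => (μ + σ * z) * f z) a μ hσ,
          smul_eq_mul, ← mul_assoc, one_div_mul_cancel hσ.ne', one_mul]

end Substitution

section Gumbel

theorem gumbelPdf_eq_exp_mul_exp (z : ℝ) :
    gumbelPdf z = exp (-(z + eulerMascheroniConstant)) *
      exp (-exp (-(z + eulerMascheroniConstant))) := by
  rw [gumbelPdf, ← exp_add]
  ring_nf

theorem integral_mul_gumbelPdf_Ioi_eq_integral_exp_neg (g : ℝ → ℝ) (m : ℝ) :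
    ∫ z in Ioi m, g z * gumbelPdf z =
      ∫ t in (0 : ℝ)..exp (-(m + eulerMascheroniConstant)),
        g (-log t - eulerMascheroniConstant) * exp (-t) := by
  rw [← integral_comp_exp_neg_add_Ioi]
  refine integral_congr_ae (ae_of_all _ fun z => ?_)
  simp [gumbelPdf_eq_exp_mul_exp, mul_left_comm]

theorem integrableOn_mul_gumbelPdf_Ioi_iff (g : ℝ → ℝ) (m : ℝ) :
    IntegrableOn (fun z => g z * gumbelPdf z) (Ioi m) ↔
      IntegrableOn (fun t => g (-log t - eulerMascheroniConstant) * exp (-t))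
        (Ioo 0 (exp (-(m + eulerMascheroniConstant)))) := by
  rw [← integrableOn_comp_exp_neg_add_Ioi]
  simp [gumbelPdf_eq_exp_mul_exp, mul_left_comm]

theorem integrableOn_gumbelPdf_Ioi (m : ℝ) : IntegrableOn gumbelPdf (Ioi m) := by
  simpa using (integrableOn_mul_gumbelPdf_Ioi_iff 1 m).2
    (by simpa using (integrableOn_exp_neg_Ioi 0).mono_set Ioo_subset_Ioi_self)

theorem integral_gumbelPdf_Ioi (m : ℝ) :
    ∫ z in Ioi m, gumbelPdf z = 1 - exp (-exp (-(m + eulerMascheroniConstant))) := by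
  simpa using integral_mul_gumbelPdf_Ioi_eq_integral_exp_neg 1 m

theorem integrableOn_id_mul_gumbelPdf_Ioi (m : ℝ) :
    IntegrableOn (fun z => z * gumbelPdf z) (Ioi m) := by
  rw [integrableOn_mul_gumbelPdf_Ioi_iff (fun z => z)]
  simp only [sub_mul, neg_mul]
  exact (integrableOn_log_mul_exp_neg_Ioi_zero.neg.sub
    ((integrableOn_exp_neg_Ioi 0).const_mul _)).mono_set Ioo_subset_Ioi_self

theorem integral_id_mul_gumbelPdf_Ioi (m : ℝ) :
    ∫ z in Ioi m, z * gumbelPdf z =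
      E1 (exp (-(m + eulerMascheroniConstant))) -
        m * exp (-exp (-(m + eulerMascheroniConstant))) := by
  rw [integral_mul_gumbelPdf_Ioi_eq_integral_exp_neg (fun z => z)]
  set a := exp (-(m + eulerMascheroniConstant))
  have ha_pos : 0 < a := exp_pos _
  have hlog_a : log a = -(m + eulerMascheroniConstant) := log_exp _
  have hlog : IntervalIntegrable (fun t => log t * exp (-t)) volume 0 a :=
    (intervalIntegrable_iff_integrableOn_Ioc_of_le ha_pos.le).2
      (integrableOn_log_mul_exp_neg_Ioi_zero.mono_set Ioc_subset_Ioi_self)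
  have hexp : IntervalIntegrable (fun t => exp (-t)) volume 0 a :=
    (by fun_prop : Continuous fun t : ℝ => exp (-t)).intervalIntegrable 0 a
  calc ∫ t in (0 : ℝ)..a, (-log t - eulerMascheroniConstant) * exp (-t)
      = ∫ t in (0 : ℝ)..a, (-eulerMascheroniConstant * exp (-t) - log t * exp (-t)) := by
        congr! 2 with t
        ring
    _ = -eulerMascheroniConstant * (1 - exp (-a)) -
          (-eulerMascheroniConstant - log a * exp (-a) - E1 a) := by
        rw [intervalIntegral.integral_sub (hexp.const_mul _) hlog,
          intervalIntegral.integral_const_mul, integral_log_mul_exp_neg ha_pos]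
        simp
    _ = E1 a - m * exp (-a) := by
        rw [hlog_a]
        ring

end Gumbel

/-- Truncated first moment of the Gumbel distribution:
`∫_M^∞ x φ(x; μ, σ) dx = μ − M exp(−e^{−b}) + σ E1(e^{−b})` with `b = (M − μ)/σ + γ`. -/
theorem gumbel_truncated_integral (μ σ M : ℝ) (hσ : 0 < σ)
    (b : ℝ) (hb : b = (M - μ) / σ + Real.eulerMascheroniConstant) :
    ∫ x in Set.Ioi M, x * ((1 / σ) * gumbelPdf ((x - μ) / σ)) =
      μ - M * Real.exp (-Real.exp (-b)) + σ * E1 (Real.exp (-b)) := by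
  calc ∫ x in Ioi M, x * ((1 / σ) * gumbelPdf ((x - μ) / σ))
      = ∫ z in Ioi ((M - μ) / σ), (μ + σ * z) * gumbelPdf z :=
        integral_mul_comp_sub_div_Ioi gumbelPdf M μ hσ
    _ = μ * (∫ z in Ioi ((M - μ) / σ), gumbelPdf z) +
          σ * ∫ z in Ioi ((M - μ) / σ), z * gumbelPdf z := by
        simp_rw [add_mul, mul_assoc]
        rw [integral_add ((integrableOn_gumbelPdf_Ioi _).const_mul _)
          ((integrableOn_id_mul_gumbelPdf_Ioi _).const_mul _), integral_const_mul,
          integral_const_mul]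
    _ = μ - M * exp (-exp (-b)) + σ * E1 (exp (-b)) := by
        rw [integral_gumbelPdf_Ioi, integral_id_mul_gumbelPdf_Ioi, ← hb]
        field_simp
        ring
end
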